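/- There exists a binary sequence x ∈ {0,1}^ℕ that is normal in base 2 but not typical; i.e. the set Normal ∖ TpcN is nonempty. -/

import Mathlib

/-!
By Borel's theorem almost every sequence of fair coin tosses is normal. The windows of length `m` of
an i.i.d. sequence are independent as soon as they do not overlap, so the strong law of large
numbers holds along each progression of step `m + 1`, hence for the whole sequence of windows.

Normality survives changing the sequence on a set of positions of density zero. Overwriting a normal
sequence by ones at the positions `2 ^ k, …, 2 ^ k + 2 * k` for all `k` changes only
`O((log n) ^ 2)` of the first `n` digits, but makes `L_n / log₂ n` at `n = 2 ^ (k + 1)` at least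
`2 * k / (k + 1)`, which tends to `2`.
-/

open Filter

open Classical in
/-- `L_n(x)`: the maximal length of a run of consecutive ones among the first `n`
digits (positions `1,…,n`) of the binary sequence `x`. -/
noncomputable def runL (x : ℕ → Bool) (n : ℕ) : ℕ :=
  Nat.findGreatest
    (fun j => ∃ i, i + j ≤ n ∧ ∀ k, 1 ≤ k → k ≤ j → x (i + k) = true) n

/-- A binary sequence is typical if `L_n(x)/log₂ n → 1`. -/
def Typical (x : ℕ → Bool) : Prop :=
  Tendsto (fun n : ℕ => (runL x n : ℝ) / Real.logb 2 (n : ℝ)) atTop (nhds 1)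

/-- `N(x, w, n)`: the number of occurrences of the block `w` in `x` starting at
a position `i` with `1 ≤ i ≤ n`. -/
def occCount (x : ℕ → Bool) (w : List Bool) (n : ℕ) : ℕ :=
  ((Finset.Icc 1 n).filter
    (fun i => ∀ k ∈ Finset.range w.length, x (i + k) = w.getD k false)).card

/-- A binary sequence is normal in base 2 if every nonempty block `w` appears
with frequency `2^{-|w|}`. -/
def NormalBaseTwo (x : ℕ → Bool) : Prop :=
  ∀ w : List Bool, w ≠ [] →
    Tendsto (fun n : ℕ => (occCount x w n : ℝ) / (n : ℝ)) atTop
      (nhds (1 / 2 ^ w.length))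

open MeasureTheory ProbabilityTheory
open scoped Topology

section ArithmeticProgressions

theorem sum_range_eq_sum_progressions {M : Type*} [AddCommMonoid M] (f : ℕ → M) {m : ℕ}
    (hm : 0 < m) (n : ℕ) :
    ∑ i ∈ Finset.range n, f i =
      ∑ r ∈ Finset.range m, ∑ j ∈ Finset.range ((n - r) ⌈/⌉ m), f (r + m * j) := by
  have lt_ceilDiv_iff (r j : ℕ) : j < (n - r) ⌈/⌉ m ↔ r + m * j < n := by
    rw [← not_le, ceilDiv_le_iff_le_mul hm]
    lia
  rw [Finset.sum_sigma']
  refine Finset.sum_bij' (fun i _ ↦ ⟨i % m, i / m⟩) (fun p _ ↦ p.1 + m * p.2) ?_ ?_ ?_ ?_ ?_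
  · intro i hi
    simpa [lt_ceilDiv_iff, Nat.mod_add_div, Nat.mod_lt _ hm] using hi
  · rintro ⟨r, j⟩ hp
    simp only [Finset.mem_sigma, Finset.mem_range, lt_ceilDiv_iff] at hp ⊢
    exact hp.2
  · exact fun i _ ↦ Nat.mod_add_div i m
  · rintro ⟨r, j⟩ hp
    have hr : r < m := by simpa using (Finset.mem_sigma.1 hp).1
    simp [Nat.add_mul_mod_self_left, Nat.mod_eq_of_lt hr, Nat.add_mul_div_left _ _ hm,
      Nat.div_eq_of_lt hr]
  · exact fun i _ ↦ by rw [Nat.mod_add_div]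

theorem tendsto_sub_ceilDiv_atTop (r : ℕ) {m : ℕ} (hm : 0 < m) :
    Tendsto (fun n : ℕ ↦ (n - r) ⌈/⌉ m) atTop atTop :=
  tendsto_atTop.2 fun b ↦ by
    filter_upwards [eventually_ge_atTop (r + m * b)] with n hn
    have : n - r ≤ m * ((n - r) ⌈/⌉ m) := le_smul_ceilDiv hm
    exact Nat.le_of_mul_le_mul_left (by lia) hm

theorem tendsto_sub_ceilDiv_div (r : ℕ) {m : ℕ} (hm : 0 < m) :
    Tendsto (fun n : ℕ ↦ (((n - r) ⌈/⌉ m : ℕ) : ℝ) / n) atTop (𝓝 (m : ℝ)⁻¹) := by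
  have hm' : (0 : ℝ) < m := by exact_mod_cast hm
  have h_lower : Tendsto (fun n : ℕ ↦ (m : ℝ)⁻¹ * (1 - r / n)) atTop (𝓝 (m : ℝ)⁻¹) := by
    simpa using ((tendsto_const_div_atTop_nhds_zero_nat (r : ℝ)).const_sub 1).const_mul (m : ℝ)⁻¹
  have h_upper : Tendsto (fun n : ℕ ↦ (m : ℝ)⁻¹ * (1 + m / n)) atTop (𝓝 (m : ℝ)⁻¹) := by
    simpa using ((tendsto_const_div_atTop_nhds_zero_nat (m : ℝ)).const_add 1).const_mul (m : ℝ)⁻¹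
  refine tendsto_of_tendsto_of_tendsto_of_le_of_le' h_lower h_upper ?_ ?_ <;>
    filter_upwards [eventually_gt_atTop 0] with n hn
  · have h : (n : ℝ) ≤ r + m * ((n - r) ⌈/⌉ m : ℕ) := by
      have : n - r ≤ m * ((n - r) ⌈/⌉ m) := le_smul_ceilDiv hm
      exact_mod_cast Nat.sub_le_iff_le_add'.1 this
    field_simp
    linarith
  · have h : (m * ((n - r) ⌈/⌉ m : ℕ) : ℝ) ≤ n + m := by
      have : m * ((n - r) ⌈/⌉ m) ≤ n - r + m - 1 := Nat.mul_div_le _ _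
      exact_mod_cast this.trans (by lia)
    field_simp
    linarith

theorem tendsto_average_of_progressions {E : Type*} [AddCommMonoid E] [Module ℝ E]
    [TopologicalSpace E] [ContinuousAdd E] [ContinuousSMul ℝ E] {f c : ℕ → E} {m : ℕ}
    (hm : 0 < m)
    (h : ∀ r < m, Tendsto (fun n : ℕ ↦ (n : ℝ)⁻¹ • ∑ j ∈ Finset.range n, f (r + m * j))
      atTop (𝓝 (c r))) :
    Tendsto (fun n : ℕ ↦ (n : ℝ)⁻¹ • ∑ i ∈ Finset.range n, f i) atTop
      (𝓝 ((m : ℝ)⁻¹ • ∑ r ∈ Finset.range m, c r)) := by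
  have h_weighted := tendsto_finsetSum (Finset.range m) fun r hr ↦
    (tendsto_sub_ceilDiv_div r hm).smul
      ((h r (Finset.mem_range.1 hr)).comp (tendsto_sub_ceilDiv_atTop r hm))
  rw [← Finset.smul_sum] at h_weighted
  refine h_weighted.congr fun n ↦ ?_
  rw [sum_range_eq_sum_progressions f hm, Finset.smul_sum]
  refine Finset.sum_congr rfl fun r _ ↦ ?_
  rcases Nat.eq_zero_or_pos ((n - r) ⌈/⌉ m) with hq | hq
  · simp [hq]
  · have : (((n - r) ⌈/⌉ m : ℕ) : ℝ) ≠ 0 := by positivity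
    rw [Function.comp_apply, smul_smul]
    congr 1
    field_simp

end ArithmeticProgressions

section StrongLaw

variable {Ω : Type*} {mΩ : MeasurableSpace Ω} {P : Measure Ω}
  {E : Type*} [NormedAddCommGroup E] [NormedSpace ℝ E] [CompleteSpace E]
  [MeasurableSpace E] [BorelSpace E]

theorem strong_law_ae_of_indepFun_of_add_le {Y : ℕ → Ω → E} (m : ℕ)
    (hint : Integrable (Y 0) P) (hindep : ∀ i j, i + m ≤ j → Y i ⟂ᵢ[P] Y j)
    (hident : ∀ i, IdentDistrib (Y i) (Y 0) P P) :
    ∀ᵐ ω ∂P, Tendsto (fun n : ℕ ↦ (n : ℝ)⁻¹ • ∑ i ∈ Finset.range n, Y i ω) atTop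
      (𝓝 (∫ ω, Y 0 ω ∂P)) := by
  have h_progression (r : ℕ) : ∀ᵐ ω ∂P,
      Tendsto (fun n : ℕ ↦ (n : ℝ)⁻¹ • ∑ j ∈ Finset.range n, Y (r + (m + 1) * j) ω) atTop
        (𝓝 (∫ ω, Y 0 ω ∂P)) := by
    have h_far {j j' : ℕ} (h : j < j') : r + (m + 1) * j + m ≤ r + (m + 1) * j' := by nlinarith
    have h_indep : Pairwise (Function.onFun (· ⟂ᵢ[P] ·) fun j ↦ Y (r + (m + 1) * j)) :=
      fun j j' hne ↦ hne.lt_or_gt.elim (fun h ↦ hindep _ _ (h_far h))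
        (fun h ↦ (hindep _ _ (h_far h)).symm)
    have h_law := strong_law_ae (fun j ↦ Y (r + (m + 1) * j))
      ((hident _).integrable_iff.2 hint) h_indep fun j ↦ (hident _).trans (hident _).symm
    rwa [(hident _).integral_eq] at h_law
  filter_upwards [ae_all_iff.2 h_progression] with ω hω
  have h_average := tendsto_average_of_progressions (f := (Y · ω)) m.succ_pos fun r _ ↦ hω r
  rwa [Finset.sum_const, Finset.card_range, ← Nat.cast_smul_eq_nsmul ℝ,
    inv_smul_smul₀ (by positivity)] at h_average

variable {ι α : Type*} [MeasurableSpace α]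

theorem indepFun_pi_of_disjoint_range {κ κ' : Type*} [Finite κ] [Finite κ'] {X : ι → Ω → α}
    (hX : iIndepFun X P) (hXm : ∀ i, AEMeasurable (X i) P) {f : κ → ι} {g : κ' → ι}
    (hfg : Disjoint (Set.range f) (Set.range g)) :
    (fun ω k ↦ X (f k) ω) ⟂ᵢ[P] (fun ω k ↦ X (g k) ω) := by
  have h := hX.indepFun_finset₀ (Set.finite_range f).toFinset (Set.finite_range g).toFinset
    (by simpa using hfg) hXm
  exact h.comp
    (φ := fun v k ↦ v ⟨f k, by simp⟩) (ψ := fun v k ↦ v ⟨g k, by simp⟩)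
    (measurable_pi_lambda _ fun _ ↦ measurable_pi_apply _)
    (measurable_pi_lambda _ fun _ ↦ measurable_pi_apply _)

theorem ae_tendsto_average_window {X : ℕ → Ω → α} {μ : Measure α} (hX : iIndepFun X P)
    (hlaw : ∀ i, HasLaw (X i) μ P) {m : ℕ} {g : (Fin m → α) → E}
    (hg : Integrable g (Measure.pi fun _ ↦ μ)) :
    ∀ᵐ ω ∂P, Tendsto
      (fun n : ℕ ↦ (n : ℝ)⁻¹ • ∑ i ∈ Finset.range n, g fun k ↦ X (i + k) ω) atTop
      (𝓝 (∫ v, g v ∂Measure.pi fun _ ↦ μ)) := by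
  have h_window (i : ℕ) : HasLaw (fun ω (k : Fin m) ↦ X (i + k) ω) (Measure.pi fun _ ↦ μ) P :=
    iIndepFun.hasLaw_pi (fun k ↦ hlaw (i + k))
      (hX.precomp (g := fun k : Fin m ↦ i + (k : ℕ)) fun k l h ↦ Fin.ext (by simpa using h))
  have hg_meas (i : ℕ) : AEMeasurable g (P.map fun ω (k : Fin m) ↦ X (i + k) ω) := by
    rw [(h_window i).map_eq]
    exact hg.aestronglyMeasurable.aemeasurable
  rw [← (h_window 0).integral_comp hg.aestronglyMeasurable]
  refine strong_law_ae_of_indepFun_of_add_le (Y := fun i ω ↦ g fun k ↦ X (i + k) ω) m ?_ ?_ ?_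
  · refine Integrable.comp_aemeasurable ?_ (h_window 0).aemeasurable
    rwa [(h_window 0).map_eq]
  · intro i j hij
    refine (indepFun_pi_of_disjoint_range hX (fun i ↦ (hlaw i).aemeasurable) ?_).comp₀
      (h_window i).aemeasurable (h_window j).aemeasurable (hg_meas i) (hg_meas j)
    rw [Set.disjoint_range_iff]
    lia
  · intro i
    refine IdentDistrib.comp_of_aemeasurable ⟨(h_window i).aemeasurable, (h_window 0).aemeasurable,
      (h_window i).map_eq.trans (h_window 0).map_eq.symm⟩ (hg_meas i)

end StrongLaw

section Borel

theorem occCount_eq_sum_indicator (x : ℕ → Bool) (w : List Bool) (n : ℕ) :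
    (occCount x w n : ℝ) =
      ∑ i ∈ Finset.range n, Set.indicator {w.get} (1 : (Fin w.length → Bool) → ℝ)
        fun k ↦ x (i + k + 1) := by
  have h_occ (i : ℕ) : (∀ k ∈ Finset.range w.length, x (i + 1 + k) = w.getD k false) ↔
      (fun k : Fin w.length ↦ x (i + k + 1)) = w.get := by
    simp +contextual [funext_iff, Fin.forall_iff, add_right_comm]
  have h_Icc : Finset.Icc 1 n = Finset.Ico (0 + 1) (n + 1) := rfl
  rw [occCount, Finset.card_filter, h_Icc, ← Finset.sum_Ico_add', ← Finset.range_eq_Ico,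
    Nat.cast_sum]
  simp only [h_occ, Set.indicator_apply, Set.mem_singleton_iff, Pi.one_apply, Nat.cast_ite,
    Nat.cast_one, Nat.cast_zero]

theorem ae_normalBaseTwo {Ω : Type*} {mΩ : MeasurableSpace Ω} {P : Measure Ω}
    {X : ℕ → Ω → Bool} (hX : iIndepFun X P)
    (hlaw : ∀ i, HasLaw (X i) (uniformOn Set.univ) P) :
    ∀ᵐ ω ∂P, NormalBaseTwo fun i ↦ X i ω := by
  have h_freq (w : List Bool) : ∀ᵐ ω ∂P,
      Tendsto (fun n : ℕ ↦ (occCount (fun i ↦ X i ω) w n : ℝ) / n) atTop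
        (𝓝 (1 / 2 ^ w.length)) := by
    have h_prob : ∫ v, Set.indicator {w.get} 1 v
        ∂Measure.pi (fun _ : Fin w.length ↦ uniformOn (Set.univ : Set Bool)) =
          (1 / 2 ^ w.length : ℝ) := by
      rw [integral_indicator_one (measurableSet_singleton _), Measure.real, Measure.pi_singleton]
      have h_bit (b : Bool) : (uniformOn Set.univ {b}).toReal = (2⁻¹ : ℝ) := by
        rw [uniformOn_univ]
        simp
      simp only [ENNReal.toReal_prod, h_bit]
      simp
    have h_law := ae_tendsto_average_window (hX.precomp (g := (· + 1)) (add_left_injective 1))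
      (fun i ↦ hlaw (i + 1)) (g := Set.indicator {w.get} (1 : (Fin w.length → Bool) → ℝ))
      ((integrable_const 1).indicator (measurableSet_singleton _))
    rw [h_prob] at h_law
    filter_upwards [h_law] with ω hω
    simpa only [occCount_eq_sum_indicator, div_eq_inv_mul, smul_eq_mul] using hω
  filter_upwards [ae_all_iff.2 h_freq] with ω hω w _ using hω w

theorem exists_normalBaseTwo : ∃ x : ℕ → Bool, NormalBaseTwo x := by
  obtain ⟨Ω, _, P, X, -, hlaw, hX, _⟩ := exists_iid ℕ (uniformOn (Set.univ : Set Bool))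
  obtain ⟨ω, hω⟩ := (ae_normalBaseTwo hX hlaw).exists
  exact ⟨fun i ↦ X i ω, hω⟩

end Borel

section DensityZero

/-- The predicate `p` has natural density zero: the proportion of `i < n` satisfying `p` tends to
zero. -/
def HasDensityZero (p : ℕ → Prop) [DecidablePred p] : Prop :=
  Tendsto (fun n : ℕ ↦ (n.count p : ℝ) / n) atTop (𝓝 0)

namespace HasDensityZero

variable {p q : ℕ → Prop} [DecidablePred p] [DecidablePred q]

theorem mono (hq : HasDensityZero q) (hpq : ∀ i, p i → q i) : HasDensityZero p :=
  squeeze_zero (fun _ ↦ by positivity)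
    (fun n ↦ by
      have : n.count p ≤ n.count q := Nat.count_mono_left fun i _ ↦ hpq i
      gcongr) hq

theorem tendsto_count_add_div (hp : HasDensityZero p) (a : ℕ) :
    Tendsto (fun n : ℕ ↦ ((n + a).count p : ℝ) / n) atTop (𝓝 0) := by
  have h_sum : Tendsto (fun n : ℕ ↦ (n.count p : ℝ) / n + a / n) atTop (𝓝 0) := by
    simpa using Tendsto.add hp (tendsto_const_div_atTop_nhds_zero_nat (a : ℝ))
  refine squeeze_zero (fun _ ↦ by positivity) (fun n ↦ ?_) h_sum
  rw [← add_div]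
  gcongr
  rw [Nat.count_add]
  exact_mod_cast Nat.add_le_add_left (Nat.count_le _) _

end HasDensityZero

theorem occCount_le_add_count_ne (x y : ℕ → Bool) (w : List Bool) (n : ℕ) :
    occCount x w n ≤
      occCount y w n + w.length * (n + w.length).count (fun i ↦ x i ≠ y i) := by
  let differ (k : ℕ) : Finset ℕ := {i ∈ Finset.Icc 1 n | x (i + k) ≠ y (i + k)}
  have h_differ {k : ℕ} (hk : k < w.length) :
      (differ k).card ≤ (n + w.length).count (fun i ↦ x i ≠ y i) := by
    rw [Nat.count_eq_card_filter_range]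
    refine Finset.card_le_card_of_injOn (· + k) (fun i hi ↦ ?_) (add_left_injective k).injOn
    simp only [differ, Finset.coe_filter, Finset.mem_Icc, Finset.mem_range,
      Set.mem_ofPred_eq] at hi ⊢
    exact ⟨by lia, hi.2⟩
  calc occCount x w n
      ≤ occCount y w n + ((Finset.range w.length).biUnion differ).card := by
        refine (Finset.card_le_card fun i hi ↦ ?_).trans (Finset.card_union_le _ _)
        simp only [differ, Finset.mem_union, Finset.mem_filter, Finset.mem_biUnion] at hi ⊢
        by_cases h_eq : ∀ k ∈ Finset.range w.length, x (i + k) = y (i + k)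
        · exact .inl ⟨hi.1, fun k hk ↦ h_eq k hk ▸ hi.2 k hk⟩
        · push Not at h_eq
          obtain ⟨k, hk, hne⟩ := h_eq
          exact .inr ⟨k, hk, hi.1, hne⟩
    _ ≤ occCount y w n + w.length * (n + w.length).count (fun i ↦ x i ≠ y i) := by
        gcongr
        simpa using Finset.card_biUnion_le_card_mul (Finset.range w.length) differ _
          fun k hk ↦ h_differ (Finset.mem_range.1 hk)

theorem abs_occCount_sub_le (x y : ℕ → Bool) (w : List Bool) (n : ℕ) :
    |(occCount x w n : ℝ) - occCount y w n| ≤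
      w.length * (n + w.length).count (fun i ↦ x i ≠ y i) := by
  have hxy := occCount_le_add_count_ne x y w n
  have hyx := occCount_le_add_count_ne y x w n
  simp only [ne_comm (a := y _)] at hyx
  rw [abs_sub_le_iff, sub_le_iff_le_add', sub_le_iff_le_add']
  exact ⟨by exact_mod_cast hxy, by exact_mod_cast hyx⟩

theorem NormalBaseTwo.of_hasDensityZero_ne {x y : ℕ → Bool} (hx : NormalBaseTwo x)
    (hxy : HasDensityZero fun i ↦ x i ≠ y i) : NormalBaseTwo y := by
  intro w hw
  have h_diff :
      Tendsto (fun n : ℕ ↦ ((occCount x w n : ℝ) - occCount y w n) / n) atTop (𝓝 0) := by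
    have h_bound := (hxy.tendsto_count_add_div w.length).const_mul (w.length : ℝ)
    rw [mul_zero] at h_bound
    refine squeeze_zero_norm (fun n ↦ ?_) h_bound
    rw [norm_div, Real.norm_eq_abs, Real.norm_natCast, ← mul_div_assoc]
    gcongr
    exact abs_occCount_sub_le x y w n
  simpa [← sub_div] using (hx w hw).sub h_diff

end DensityZero

section Runs

theorem le_runL {x : ℕ → Bool} {i j n : ℕ} (hn : i + j ≤ n)
    (hx : ∀ k, 1 ≤ k → k ≤ j → x (i + k) = true) : j ≤ runL x n := by
  classical
  exact Nat.le_findGreatest (by lia) ⟨i, hn, hx⟩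

theorem not_typical_of_frequently_le_runL {x : ℕ → Bool} {c : ℝ} (hc : 1 < c)
    (h : ∃ᶠ n : ℕ in atTop, c * Real.logb 2 n ≤ runL x n) : ¬ Typical x := by
  intro hx
  refine h ?_
  filter_upwards [hx.eventually_lt_const hc, eventually_gt_atTop 1] with n hn h_one
  have h_log : 0 < Real.logb 2 n := Real.logb_pos one_lt_two (by exact_mod_cast h_one)
  exact not_le.2 ((div_lt_iff₀ h_log).1 hn)

end Runs

section PlantedRuns

/-- The positions `i` with `2 ^ k ≤ i ≤ 2 ^ k + 2 * k` for some `k`, in the decidable form where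
`k = ⌊log₂ i⌋`. The junk value `Nat.log 2 0 = 0` makes `0` such a position as well. -/
def InPlantedRun (i : ℕ) : Prop :=
  i ≤ 2 ^ Nat.log 2 i + 2 * Nat.log 2 i

instance : DecidablePred InPlantedRun := fun _ ↦ Nat.decLe _ _

/-- The sequence `x` overwritten by ones at the positions in planted runs. -/
def plantRuns (x : ℕ → Bool) (i : ℕ) : Bool :=
  x i || decide (InPlantedRun i)

theorem inPlantedRun_two_pow_add {k t : ℕ} (ht : t ≤ 2 * k) : InPlantedRun (2 ^ k + t) := by
  have hk : k ≤ Nat.log 2 (2 ^ k + t) := Nat.le_log_of_pow_le one_lt_two (Nat.le_add_right _ _)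
  unfold InPlantedRun
  gcongr
  · exact one_le_two
  · lia

theorem count_inPlantedRun_le (n : ℕ) :
    n.count InPlantedRun ≤ 2 * (Nat.log 2 n + 1) ^ 2 := by
  set L := Nat.log 2 n
  -- The `- 1` makes room for the position `0`, which is not of the form `2 ^ k + t`.
  have h_cover : {i ∈ Finset.range n | InPlantedRun i} ⊆
      (Finset.range (L + 1) ×ˢ Finset.range (2 * L + 2)).image fun p ↦ 2 ^ p.1 + p.2 - 1 := by
    intro i hi
    obtain ⟨h_lt, h_run⟩ := Finset.mem_filter.1 hi
    rw [Finset.mem_range] at h_lt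
    rw [InPlantedRun] at h_run
    have h_log : Nat.log 2 i ≤ L := Nat.log_mono_right h_lt.le
    have h_pow : 2 ^ Nat.log 2 i ≤ i + 1 := by
      rcases eq_or_ne i 0 with rfl | hi0
      · simp
      · exact (Nat.pow_log_le_self 2 hi0).trans i.le_succ
    refine Finset.mem_image.2 ⟨(Nat.log 2 i, i + 1 - 2 ^ Nat.log 2 i), ?_, by lia⟩
    simp only [Finset.mem_product, Finset.mem_range]
    lia
  calc n.count InPlantedRun
      ≤ (L + 1) * (2 * L + 2) := by
        rw [Nat.count_eq_card_filter_range]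
        simpa using (Finset.card_le_card h_cover).trans Finset.card_image_le
    _ = 2 * (L + 1) ^ 2 := by ring

theorem tendsto_natLog_add_one_pow_div {b : ℕ} (hb : 1 < b) (p : ℕ) :
    Tendsto (fun n : ℕ ↦ (Nat.log b n + 1 : ℝ) ^ p / n) atTop (𝓝 0) := by
  have h_log : Tendsto (fun n ↦ Nat.log b n + 1) atTop atTop :=
    tendsto_atTop.2 fun k ↦ by
      filter_upwards [eventually_ge_atTop (b ^ k)] with n hn
      exact (Nat.le_log_of_pow_le hb hn).trans (Nat.le_succ _)
  have h_exp := ((tendsto_pow_const_div_const_pow_of_one_lt p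
    (r := b) (by exact_mod_cast hb)).comp h_log).const_mul (b : ℝ)
  rw [mul_zero] at h_exp
  refine squeeze_zero' (Eventually.of_forall fun _ ↦ by positivity) ?_ h_exp
  filter_upwards [eventually_gt_atTop 0] with n hn
  have h_pow : (b : ℝ) ^ Nat.log b n ≤ n := by exact_mod_cast Nat.pow_log_le_self b hn.ne'
  have : (0 : ℝ) < b := by positivity
  calc (Nat.log b n + 1 : ℝ) ^ p / n
      ≤ (Nat.log b n + 1 : ℝ) ^ p / b ^ Nat.log b n := by gcongr
    _ = b * (((Nat.log b n + 1 : ℕ) : ℝ) ^ p / b ^ (Nat.log b n + 1)) := by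
        push_cast
        field_simp
        ring

theorem hasDensityZero_inPlantedRun : HasDensityZero InPlantedRun := by
  have h_bound := (tendsto_natLog_add_one_pow_div one_lt_two 2).const_mul 2
  rw [mul_zero] at h_bound
  refine squeeze_zero (fun _ ↦ by positivity) (fun n ↦ ?_) h_bound
  rw [← mul_div_assoc]
  gcongr
  exact_mod_cast count_inPlantedRun_le n

theorem normalBaseTwo_plantRuns {x : ℕ → Bool} (hx : NormalBaseTwo x) :
    NormalBaseTwo (plantRuns x) :=
  hx.of_hasDensityZero_ne <| hasDensityZero_inPlantedRun.mono fun i hi ↦ by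
    by_contra h
    exact hi (by simp [plantRuns, h])

theorem two_mul_le_runL_plantRuns (x : ℕ → Bool) (k : ℕ) :
    2 * k ≤ runL (plantRuns x) (2 ^ (k + 1)) := by
  have hk : 2 * k ≤ 2 ^ k := by
    cases k with
    | zero => simp
    | succ j => rw [pow_succ']; gcongr; exact Nat.lt_two_pow_self
  refine le_runL (i := 2 ^ k) (by rw [pow_succ]; lia) fun t _ ht ↦ ?_
  simp [plantRuns, inPlantedRun_two_pow_add ht]

theorem not_typical_plantRuns (x : ℕ → Bool) : ¬ Typical (plantRuns x) := by
  refine not_typical_of_frequently_le_runL (c := 3 / 2) (by norm_num) ?_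
  refine ((tendsto_pow_atTop_atTop_of_one_lt one_lt_two).comp
    (tendsto_add_atTop_nat 1)).frequently (Eventually.frequently ?_)
  filter_upwards [eventually_ge_atTop 3] with k hk
  have h_run : (2 * k : ℝ) ≤ runL (plantRuns x) (2 ^ (k + 1)) := by
    exact_mod_cast two_mul_le_runL_plantRuns x k
  have h_log : Real.logb 2 ((2 ^ (k + 1) : ℕ) : ℝ) = k + 1 := by
    simp [Real.logb_pow]
  have hk' : (3 : ℝ) ≤ k := by exact_mod_cast hk
  simp only [Function.comp_apply]
  linarith

end PlantedRuns

/-- There is a binary sequence that is normal in base 2 but not typical: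
`Normal ∖ TpcN ≠ ∅`. -/
theorem normal_not_typical_nonempty :
    ∃ x : ℕ → Bool, NormalBaseTwo x ∧ ¬ Typical x := by
  obtain ⟨x, hx⟩ := exists_normalBaseTwo
  exact ⟨plantRuns x, normalBaseTwo_plantRuns hx, not_typical_plantRuns x⟩
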